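/- Let U be a finite universe, F a family of nonempty subsets of U, and κ an integer with 0 ≤ κ ≤ |U|. For every H ⊆ U, the tree obtained from T(U,F) by applying, at each cut 'u ≤ 0' with u ∉ H, the raising operation keeping the child that continues the path has zero errors on E(U,F) if and only if H intersects every member of F. Consequently, there is a decision tree obtainable from T(U,F) by subtree raising operations that has exactly κ+1 inner nodes and zero errors on E(U,F) if and only if U contains a hitting set of F of size κ. -/

import Mathlib

/-- The two class labels. -/
inductive Label where
  | blue
  | red
deriving DecidableEq

/-- A decision tree over examples `ι → ℝ` with classes `{blue, red}`:
every inner node carries a feature and a threshold, every leaf a class label.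
An example goes to the left child if its value in the node's feature is at most
the threshold, and to the right child otherwise. -/
inductive DTree (ι : Type) where
  | leaf (c : Label)
  | node (feat : ι) (thr : ℝ) (left right : DTree ι)

namespace DTree

variable {ι : Type}

/-- The class that a decision tree assigns to an example. -/
noncomputable def classify : DTree ι → (ι → ℝ) → Label
  | .leaf c, _ => c
  | .node f t l r, e => if e f ≤ t then l.classify e else r.classify e

/-- The routing path of an example (`false` = left child, `true` = right child);
it is the position of the leaf of the example. -/
noncomputable def route : DTree ι → (ι → ℝ) → List Bool
  | .leaf _, _ => []
  | .node f t l r, e => if e f ≤ t then false :: l.route e else true :: r.route e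

/-- The subtree rooted at a position (`none` if the position is not a node). -/
def subtreeAt : DTree ι → List Bool → Option (DTree ι)
  | T, [] => some T
  | .leaf _, _ :: _ => none
  | .node _ _ l r, b :: p => (if b then r else l).subtreeAt p

/-- Replace the subtree at a given position by another tree. -/
def replaceAt : DTree ι → List Bool → DTree ι → DTree ι
  | _, [], T' => T'
  | .leaf c, _ :: _, _ => .leaf c
  | .node f t l r, b :: p, T' =>
      if b then .node f t l (r.replaceAt p T') else .node f t (l.replaceAt p T') r

/-- The number of inner nodes of a decision tree. -/
def innerCount : DTree ι → ℕ
  | .leaf _ => 0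
  | .node _ _ l r => 1 + l.innerCount + r.innerCount

/-- The position `p` is an inner node of `T`. -/
def IsInnerPos (T : DTree ι) (p : List Bool) : Prop :=
  ∃ f t l r, T.subtreeAt p = some (.node f t l r)

/-- The position `p` is a node of `T`. -/
def IsNodePos (T : DTree ι) (p : List Bool) : Prop :=
  (T.subtreeAt p).isSome

/-- The feature and threshold of the inner node at position `p`. -/
def cutAt (T : DTree ι) (p : List Bool) : Option (ι × ℝ) :=
  match T.subtreeAt p with
  | some (.node f t _ _) => some (f, t)
  | _ => none

/-- The subtree raising operation at position `q` keeping the child in direction `b`: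
the subtree rooted at `q` is replaced by the subtree rooted at its `b`-child; it prunes
the node at `q` together with all inner nodes of the subtree rooted at the other child. -/
def raiseAt (T : DTree ι) (q : List Bool) (b : Bool) : DTree ι :=
  match T.subtreeAt q with
  | some (.node _ _ l r) => T.replaceAt q (if b then r else l)
  | _ => T

end DTree

/-- `E[T,p]`: the examples of `E` whose routing through `T` passes the position `p`. -/
noncomputable def reach {ι : Type} (E : Finset (ι → ℝ)) (T : DTree ι) (p : List Bool) :
    Finset (ι → ℝ) :=
  E.filter fun e => p <+: T.route e

/-- The number of errors of `T` on the training set `(E, lab)`. -/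
noncomputable def errCount {ι : Type} (T : DTree ι) (E : Finset (ι → ℝ))
    (lab : (ι → ℝ) → Label) : ℕ :=
  (E.filter fun e => T.classify e ≠ lab e).card

/-- A most frequent label of the labeled set `(E, lab)` (blue in case of a tie). -/
def majorityLabel {ι : Type} (E : Finset (ι → ℝ)) (lab : (ι → ℝ) → Label) : Label :=
  if (E.filter fun e => lab e = Label.red).card ≤ (E.filter fun e => lab e = Label.blue).card
  then Label.blue else Label.red

/-- One subtree replacement operation: some inner node of `T` is replaced by a leaf
labeled with a most frequent label of the examples reaching it. -/
def ReplStep {ι : Type} (E : Finset (ι → ℝ)) (lab : (ι → ℝ) → Label)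
    (T T' : DTree ι) : Prop :=
  ∃ p, T.IsInnerPos p ∧
    T' = T.replaceAt p (.leaf (majorityLabel (reach E T p) lab))

/-- `T` is a reasonable decision tree for `(E, lab)`: every node is reached by some
example and every leaf carries a most frequent label of the examples reaching it. -/
def Reasonable {ι : Type} (E : Finset (ι → ℝ)) (lab : (ι → ℝ) → Label)
    (T : DTree ι) : Prop :=
  (∀ p, T.IsNodePos p → (reach E T p).Nonempty) ∧
  (∀ p c, T.subtreeAt p = some (.leaf c) → ∀ c' : Label,
    ((reach E T p).filter fun e => lab e = c').card ≤
      ((reach E T p).filter fun e => lab e = c).card)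

/-- Apply a sequence of raising operations (given by positions and kept directions). -/
def applySeq {ι : Type} : DTree ι → List (List Bool × Bool) → DTree ι
  | T, [] => T
  | T, (q, b) :: rest => applySeq (T.raiseAt q b) rest

/-- Each raising operation of the sequence is applied at an inner node. -/
def ValidSeq {ι : Type} : DTree ι → List (List Bool × Bool) → Prop
  | _, [] => True
  | T, (q, b) :: rest => T.IsInnerPos q ∧ ValidSeq (T.raiseAt q b) rest

/-- The total number of inner nodes pruned by a sequence of raising operations. -/
def seqPruned {ι : Type} : DTree ι → List (List Bool × Bool) → ℕ
  | _, [] => 0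
  | T, (q, b) :: rest =>
      (match T.subtreeAt q with
        | some (.node _ _ l r) => 1 + DTree.innerCount (if b then l else r)
        | _ => 0) + seqPruned (T.raiseAt q b) rest

/-- `T'` is obtained from `T` by a (possibly empty) sequence of subtree raising
operations. -/
def RaisedFrom {ι : Type} (T T' : DTree ι) : Prop :=
  ∃ steps, ValidSeq T steps ∧ applySeq T steps = T'

/-- `T'` is obtained from `T` by a sequence of subtree raising operations pruning
exactly `m` inner nodes in total. -/
def RaisedFromPruning {ι : Type} (T : DTree ι) (m : ℕ) (T' : DTree ι) : Prop :=
  ∃ steps, ValidSeq T steps ∧ seqPruned T steps = m ∧ applySeq T steps = T'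

/-- Tracking the position of a node through one raising operation: nodes strictly
below the raised node on the discarded side, and the raised node itself, are pruned
(`none`); all other nodes survive at a possibly shifted position. -/
def stepMap (q : List Bool) (b : Bool) (p : List Bool) : Option (List Bool) :=
  if q <+: p then
    if q ++ [b] <+: p then some (q ++ p.drop (q.length + 1)) else none
  else some p

/-- Tracking the position of a node through a sequence of raising operations. -/
def seqMap : List (List Bool × Bool) → List Bool → Option (List Bool)
  | [], p => some p
  | (q, b) :: rest, p => (stepMap q b p).bind (seqMap rest)

/-- The number of errors of `T` on a multiset of labeled examples. -/
noncomputable def errCountM {ι : Type} (T : DTree ι) (E : Multiset ((ι → ℝ) × Label)) : ℕ :=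
  (E.filter fun q => T.classify q.1 ≠ q.2).card

/-- The 0/1 indicator vector of a set of coordinates. -/
def indVec {m : ℕ} (S : Finset (Fin m)) : Fin m → ℝ := fun i => if i ∈ S then 1 else 0

/-- The blue edge example of an edge `{v, w}`: value `1` exactly in the
coordinates `v` and `w`. -/
def edgeEx (n : ℕ) : Sym2 (Fin n) → (Fin (n + 1) → ℝ) :=
  Sym2.lift ⟨fun v w => indVec {v.castSucc, w.castSucc},
    fun v w => by simp only []; rw [Finset.pair_comm]⟩

/-- The blue vertex example of a vertex `v`: value `1` exactly in the coordinates
`v` and `d*` (the last coordinate). -/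
def vertEx (n : ℕ) (v : Fin n) : Fin (n + 1) → ℝ := indVec {v.castSucc, Fin.last n}

/-- The blue example with value `1` only in the coordinate `d*`. -/
def starEx (n : ℕ) : Fin (n + 1) → ℝ := indVec {Fin.last n}

/-- The labeling: the all-zero example is red, all other examples are blue. -/
noncomputable def labG (n : ℕ) : (Fin (n + 1) → ℝ) → Label :=
  fun e => if e = (fun _ => 0) then Label.red else Label.blue

/-- The training set `E(G)` of the independent-set construction. -/
noncomputable def EG {n : ℕ} (G : SimpleGraph (Fin n)) [DecidableRel G.Adj] :
    Finset (Fin (n + 1) → ℝ) :=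
  (G.edgeFinset.image (edgeEx n)) ∪ (Finset.univ.image (vertEx n)) ∪
    {starEx n, fun _ => 0}

/-- A descending path of cuts `f ≤ 0` (for `f` in the given list) whose right
children are blue leaves and whose left children continue the path, ending in the
given tree. -/
def chainB {m : ℕ} (fs : List (Fin m)) (tail : DTree (Fin m)) : DTree (Fin m) :=
  fs.foldr (fun f acc => DTree.node f 0 acc (.leaf .blue)) tail

/-- The decision tree `T(G)`: the path of cuts `v₁ ≤ 0, …, vₙ ≤ 0, d* ≤ 0`; at each
vertex cut the right child is a blue leaf; the final cut has a red left child and a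
blue right child. -/
def TG (n : ℕ) : DTree (Fin (n + 1)) :=
  chainB (List.ofFn fun i : Fin n => i.castSucc)
    (DTree.node (Fin.last n) 0 (.leaf .red) (.leaf .blue))

/-- The tree obtained from `T(G)` by applying, at each cut `v ≤ 0` with `v ∈ R`,
the raising operation keeping the child that continues the path: the path of the
cuts `v ≤ 0` for `v ∉ R` followed by the cut `d* ≤ 0`. -/
def TGkeep (n : ℕ) (R : Finset (Fin n)) : DTree (Fin (n + 1)) :=
  chainB (((List.ofFn fun i : Fin n => i).filter fun v => decide (v ∉ R)).map Fin.castSucc)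
    (DTree.node (Fin.last n) 0 (.leaf .red) (.leaf .blue))

/-- The tree obtained from `T(U,F)` by applying, at each cut `u ≤ 0` with `u ∉ H`,
the raising operation keeping the child that continues the path, so that exactly
the cuts `u ≤ 0` for `u ∈ H` together with the cut `d* ≤ 0` remain. -/
def TGsel (n : ℕ) (S : Finset (Fin n)) : DTree (Fin (n + 1)) :=
  chainB (((List.ofFn fun i : Fin n => i).filter fun v => decide (v ∈ S)).map Fin.castSucc)
    (DTree.node (Fin.last n) 0 (.leaf .red) (.leaf .blue))

/-- The blue set example of a set `S ⊆ U`: value `1` exactly in the coordinates of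
the elements of `S`. -/
def setEx (N : ℕ) (S : Finset (Fin N)) : Fin (N + 1) → ℝ :=
  indVec (S.image Fin.castSucc)

/-- The training set `E(U,F)` of the hitting-set construction. -/
noncomputable def EUF {N : ℕ} (F : Finset (Finset (Fin N))) :
    Finset (Fin (N + 1) → ℝ) :=
  (F.image (setEx N)) ∪ (Finset.univ.image (vertEx N)) ∪ {starEx N, fun _ => 0}

theorem DTree.raiseAt_node_false {ι : Type} (f : ι) (t : ℝ) (l r : DTree ι) (q : List Bool)
    (b : Bool) :
    (DTree.node f t l r).raiseAt (false :: q) b = .node f t (l.raiseAt q b) r := by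
  simp only [DTree.raiseAt, DTree.subtreeAt, DTree.replaceAt, Bool.false_eq_true, if_false]
  split <;> simp_all

theorem RaisedFrom.node_left {ι : Type} (f : ι) (t : ℝ) {l l' : DTree ι} (r : DTree ι)
    (h : RaisedFrom l l') : RaisedFrom (.node f t l r) (.node f t l' r) := by
  obtain ⟨steps, hvalid, happly⟩ := h
  refine ⟨steps.map fun s => (false :: s.1, s.2), ?_⟩
  induction steps generalizing l with
  | nil => simpa [ValidSeq, applySeq] using happly
  | cons s rest ih =>
    obtain ⟨q, b⟩ := s
    obtain ⟨hinner, hrest⟩ := hvalid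
    simp only [List.map_cons, ValidSeq, applySeq, DTree.raiseAt_node_false]
    have := ih hrest happly
    exact ⟨⟨by simpa [DTree.IsInnerPos, DTree.subtreeAt] using hinner, this.1⟩, this.2⟩

/-- Cuts can be raised away from the path of a chain one at a time. -/
theorem List.Sublist.raisedFrom_chainB {m : ℕ} {fs gs : List (Fin m)} (h : fs.Sublist gs)
    (tail : DTree (Fin m)) : RaisedFrom (chainB gs tail) (chainB fs tail) := by
  induction h with
  | slnil => exact ⟨[], trivial, rfl⟩
  | cons g _ ih =>
    obtain ⟨steps, hvalid, happly⟩ := ih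
    exact ⟨([], false) :: steps, ⟨⟨_, _, _, _, rfl⟩, hvalid⟩, happly⟩
  | cons_cons g _ ih => exact ih.node_left g 0 (.leaf .blue)

theorem innerCount_chainB {m : ℕ} (fs : List (Fin m)) (tail : DTree (Fin m)) :
    (chainB fs tail).innerCount = fs.length + tail.innerCount := by
  induction fs with
  | nil => simp [chainB]
  | cons f fs ih =>
    change 1 + (chainB fs tail).innerCount + 0 = _
    rw [ih, List.length_cons]
    omega

theorem classify_chainB {m : ℕ} (fs : List (Fin m)) (tail : DTree (Fin m)) (e : Fin m → ℝ) :
    (chainB fs tail).classify e =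
      open Classical in if ∃ f ∈ fs, 0 < e f then Label.blue else tail.classify e := by
  induction fs with
  | nil => simp [chainB]
  | cons f fs ih =>
    change (if e f ≤ 0 then (chainB fs tail).classify e else Label.blue) = _
    rw [ih]
    by_cases h : e f ≤ 0
    · simp [h, not_lt.mpr h]
    · simp [h, not_le.mp h]

/-- Raising a node of a chain that ends in a single cut yields a chain whose cuts form a
sublist, possibly with the final cut raised to a leaf. -/
theorem raiseAt_chainB {m : ℕ} (d : Fin m) (fs : List (Fin m)) (tail : DTree (Fin m))
    (htail : tail = .node d 0 (.leaf .red) (.leaf .blue) ∨ ∃ c, tail = .leaf c)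
    (q : List Bool) (b : Bool) :
    ∃ gs : List (Fin m), gs.Sublist fs ∧ ∃ tail' : DTree (Fin m),
      (tail' = .node d 0 (.leaf .red) (.leaf .blue) ∨ ∃ c, tail' = .leaf c) ∧
      (chainB fs tail).raiseAt q b = chainB gs tail' := by
  induction fs generalizing q with
  | nil =>
    refine ⟨[], .slnil, tail.raiseAt q b, ?_, rfl⟩
    obtain rfl | ⟨c, rfl⟩ := htail
    · rcases q with _ | ⟨_ | _, _ | ⟨_, _⟩⟩ <;> cases b <;>
        simp [DTree.raiseAt, DTree.subtreeAt, DTree.replaceAt]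
    · cases q <;> simp [DTree.raiseAt, DTree.subtreeAt]
  | cons f fs ih =>
    rcases q with _ | ⟨_ | _, q⟩
    · cases b
      · exact ⟨fs, List.sublist_cons_self f fs, tail, htail, rfl⟩
      · exact ⟨[], List.nil_sublist _, .leaf .blue, .inr ⟨_, rfl⟩, rfl⟩
    · obtain ⟨gs, hgs, tail', htail', heq⟩ := ih q
      refine ⟨f :: gs, hgs.cons_cons f, tail', htail', ?_⟩
      change (DTree.node f 0 (chainB fs tail) (.leaf .blue)).raiseAt (false :: q) b = _
      rw [DTree.raiseAt_node_false, heq]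
      rfl
    · refine ⟨f :: fs, List.Sublist.refl _, tail, htail, ?_⟩
      change (DTree.node f 0 (chainB fs tail) (.leaf .blue)).raiseAt (true :: q) b = _
      cases q <;> simp [DTree.raiseAt, DTree.subtreeAt, chainB]

theorem RaisedFrom.exists_eq_chainB {m : ℕ} (d : Fin m) (fs : List (Fin m))
    (tail T' : DTree (Fin m))
    (htail : tail = .node d 0 (.leaf .red) (.leaf .blue) ∨ ∃ c, tail = .leaf c)
    (h : RaisedFrom (chainB fs tail) T') :
    ∃ gs : List (Fin m), gs.Sublist fs ∧ ∃ tail' : DTree (Fin m),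
      (tail' = .node d 0 (.leaf .red) (.leaf .blue) ∨ ∃ c, tail' = .leaf c) ∧
      T' = chainB gs tail' := by
  obtain ⟨steps, -, happly⟩ := h
  induction steps generalizing fs tail with
  | nil => exact ⟨fs, List.Sublist.refl _, tail, htail, happly.symm⟩
  | cons s rest ih =>
    obtain ⟨gs, hgs, tail', htail', heq⟩ := raiseAt_chainB d fs tail htail s.1 s.2
    rw [applySeq, heq] at happly
    obtain ⟨ks, hks, h⟩ := ih gs tail' htail' happly
    exact ⟨ks, hks.trans hgs, h⟩

theorem errCount_eq_zero_iff {ι : Type} (T : DTree ι) (E : Finset (ι → ℝ))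
    (lab : (ι → ℝ) → Label) : errCount T E lab = 0 ↔ ∀ e ∈ E, T.classify e = lab e := by
  simp [errCount, Finset.filter_eq_empty_iff]

theorem indVec_pos_iff {m : ℕ} (S : Finset (Fin m)) (i : Fin m) :
    0 < indVec S i ↔ i ∈ S := by
  unfold indVec
  split <;> simp_all

theorem labG_indVec {n : ℕ} {S : Finset (Fin (n + 1))} (hS : S.Nonempty) :
    labG n (indVec S) = Label.blue := by
  obtain ⟨i, hi⟩ := hS
  refine if_neg fun h => ?_
  have := (indVec_pos_iff S i).mpr hi
  simp [h] at this

theorem classify_chainB_indVec {n : ℕ} (L : List (Fin n)) (S : Finset (Fin (n + 1))) :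
    (chainB (L.map Fin.castSucc)
      (.node (Fin.last n) 0 (.leaf .red) (.leaf .blue))).classify (indVec S) = Label.blue ↔
      (∃ u ∈ L, u.castSucc ∈ S) ∨ Fin.last n ∈ S := by
  rw [classify_chainB]
  by_cases h : ∃ u ∈ L, u.castSucc ∈ S
  · simp [indVec_pos_iff, h]
  · simp [indVec_pos_iff, h, DTree.classify, ← not_lt]

theorem errCount_chainB_EUF {N : ℕ} (F : Finset (Finset (Fin N)))
    (hF : ∀ S ∈ F, S.Nonempty) (L : List (Fin N)) :
    errCount (chainB (L.map Fin.castSucc)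
      (.node (Fin.last N) 0 (.leaf .red) (.leaf .blue))) (EUF F) (labG N) = 0 ↔
      ∀ S ∈ F, ∃ u ∈ L, u ∈ S := by
  have hset : ∀ S : Finset (Fin N), (chainB (L.map Fin.castSucc)
      (.node (Fin.last N) 0 (.leaf .red) (.leaf .blue))).classify (setEx N S) = Label.blue ↔
      ∃ u ∈ L, u ∈ S := by
    intro S
    simp [setEx, classify_chainB_indVec, Fin.castSucc_ne_last]
  rw [errCount_eq_zero_iff]
  constructor
  · intro h S hS
    have hmem : setEx N S ∈ EUF F :=
      Finset.mem_union_left _ (Finset.mem_union_left _ (Finset.mem_image_of_mem _ hS))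
    rw [← hset, h _ hmem]
    exact labG_indVec ((hF S hS).image _)
  · intro h e he
    simp only [EUF, Finset.mem_union, Finset.mem_image, Finset.mem_univ, true_and,
      Finset.mem_insert, Finset.mem_singleton] at he
    obtain (⟨S, hS, rfl⟩ | ⟨v, rfl⟩) | rfl | rfl := he
    · rw [(hset S).mpr (h S hS)]
      exact (labG_indVec ((hF S hS).image _)).symm
    · rw [vertEx, labG_indVec (by simp), classify_chainB_indVec]
      simp
    · rw [starEx, labG_indVec (by simp), classify_chainB_indVec]
      simp
    · simp [classify_chainB, DTree.classify, labG]

/-- A chain whose final cut `d* ≤ 0` was raised to a leaf misclassifies the all-zero example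
or the `d*` example. -/
theorem errCount_chainB_leaf_ne_zero {N : ℕ} (F : Finset (Finset (Fin N))) (L : List (Fin N))
    (c : Label) : errCount (chainB (L.map Fin.castSucc) (.leaf c)) (EUF F) (labG N) ≠ 0 := by
  rw [Ne, errCount_eq_zero_iff]
  intro h
  have hzero := h (fun _ => 0) (by simp [EUF])
  have hstar := h (starEx N) (by simp [EUF])
  rw [starEx, labG_indVec (by simp), classify_chainB] at hstar
  rw [classify_chainB] at hzero
  simp [indVec_pos_iff, DTree.classify, Fin.castSucc_ne_last] at hstar
  simp [DTree.classify, labG, hstar] at hzero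

/-- Let `U = Fin N` be a finite universe, `F` a family of nonempty
subsets of `U` and `0 ≤ κ ≤ |U|`. For every `H ⊆ U`, the tree obtained from
`T(U,F)` by raising away exactly the cuts `u ≤ 0` with `u ∉ H` (keeping the
continuing child each time) has zero errors on `E(U,F)` iff `H` intersects every
member of `F`. Consequently, a decision tree with exactly `κ + 1` inner nodes and
zero errors on `E(U,F)` is obtainable from `T(U,F)` by subtree raising operations
iff `U` contains a hitting set of `F` of size `κ`. -/
theorem stmt10 {N : ℕ} (F : Finset (Finset (Fin N))) (hF : ∀ S ∈ F, S.Nonempty)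
    (κ : ℕ) (hκ : κ ≤ N) :
    (∀ H : Finset (Fin N),
      errCount (TGsel N H) (EUF F) (labG N) = 0 ↔ ∀ S ∈ F, ∃ u ∈ H, u ∈ S)
    ∧ ((∃ T' : DTree (Fin (N + 1)), RaisedFrom (TG N) T' ∧
          T'.innerCount = κ + 1 ∧ errCount T' (EUF F) (labG N) = 0)
      ↔ ∃ H : Finset (Fin N), H.card = κ ∧ ∀ S ∈ F, ∃ u ∈ H, u ∈ S) := by
  have hsel : ∀ H : Finset (Fin N),
      errCount (TGsel N H) (EUF F) (labG N) = 0 ↔ ∀ S ∈ F, ∃ u ∈ H, u ∈ S := by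
    intro H
    rw [TGsel, errCount_chainB_EUF F hF]
    simp
  have hTG : TG N = chainB ((List.finRange N).map Fin.castSucc)
      (.node (Fin.last N) 0 (.leaf .red) (.leaf .blue)) := by
    rw [TG, List.ofFn_eq_map]
  have hid : (List.ofFn fun i : Fin N => i) = List.finRange N := List.ofFn_id N
  refine ⟨hsel, ?_, ?_⟩
  · rintro ⟨T', hraised, hcount, herr⟩
    rw [hTG] at hraised
    obtain ⟨gs, hgs, tail, htail, rfl⟩ :=
      hraised.exists_eq_chainB (Fin.last N) _ _ _ (.inl rfl)
    obtain ⟨L, hL, rfl⟩ := List.sublist_map_iff.mp hgs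
    obtain rfl | ⟨c, rfl⟩ := htail
    · refine ⟨L.toFinset, ?_, ?_⟩
      · rw [List.toFinset_card_of_nodup (hL.nodup (List.nodup_finRange N))]
        simpa [innerCount_chainB, DTree.innerCount] using hcount
      · simpa using (errCount_chainB_EUF F hF L).mp herr
    · exact absurd herr (errCount_chainB_leaf_ne_zero F L c)
  · rintro ⟨H, hcard, hH⟩
    refine ⟨TGsel N H, ?_, ?_, (hsel H).mpr hH⟩
    · rw [hTG, TGsel, hid]
      exact (List.filter_sublist.map _).raisedFrom_chainB _
    · have hlen : ((List.finRange N).filter fun v => decide (v ∈ H)).length = κ := by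
        rw [← List.toFinset_card_of_nodup ((List.nodup_finRange N).filter _), ← hcard]
        congr 1
        ext
        simp
      rw [TGsel, hid, innerCount_chainB, List.length_map, hlen]
      rfl
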